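/- Let x be a non-negative integer, and consider an n-server PIR scheme for a database of k records of R bits each with R ≥ 1, whose download complexity is at most R + x. If k ≥ x + 2, then for every possible query tuple (q_1, …, q_n) and every server r, the number of bits downloaded from server r satisfies d_r(q_r) ≤ x. -/

import Mathlib

open scoped ENNReal

/-- An `n`-server PIR scheme for a database of `k` records of `R` bits each. -/
structure PIRScheme (n k R : ℕ) where
  /-- The query set for each server. -/
  Q : Fin n → Type
  /-- Each query set is finite. -/
  fintypeQ : ∀ r, Fintype (Q r)
  /-- The storage size (in bits) of each server. -/
  s : Fin n → ℕ
  /-- The encoding map of each server. -/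
  E : (r : Fin n) → (Fin k → Fin R → Bool) → (Fin (s r) → Bool)
  /-- For each record index `ℓ`, a probability distribution on query tuples. -/
  D : Fin k → PMF ((r : Fin n) → Q r)
  /-- The response length of each server on each query. -/
  d : (r : Fin n) → Q r → ℕ
  /-- The deterministic response map of each server. -/
  resp : (r : Fin n) → (q : Q r) → (Fin (s r) → Bool) → (Fin (d r q) → Bool)
  /-- The reconstruction function. -/
  recon : (ℓ : Fin k) → (q : (r : Fin n) → Q r) →
    ((r : Fin n) → (Fin (d r (q r)) → Bool)) → (Fin R → Bool)
  /-- Correctness. -/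
  correct : ∀ (X : Fin k → Fin R → Bool) (ℓ : Fin k) (q : (r : Fin n) → Q r),
    q ∈ (D ℓ).support →
    recon ℓ q (fun r => resp r (q r) (E r X)) = X ℓ
  /-- Privacy: the marginal of each query component does not depend on `ℓ`. -/
  privacy : ∀ (r : Fin n) (ℓ ℓ' : Fin k),
    (D ℓ).map (fun q => q r) = (D ℓ').map (fun q => q r)

attribute [instance] PIRScheme.fintypeQ

/-- A query tuple is possible if it lies in the support of `D ℓ` for some `ℓ`. -/
def PIRScheme.Possible {n k R : ℕ} (S : PIRScheme n k R)
    (q : (r : Fin n) → S.Q r) : Prop :=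
  ∃ ℓ, q ∈ (S.D ℓ).support

/-- The download complexity: the maximum, over possible query tuples, of the
total number of downloaded bits. -/
noncomputable def PIRScheme.downloadComplexity {n k R : ℕ} (S : PIRScheme n k R) : ℕ :=
  letI : DecidablePred S.Possible := Classical.decPred _
  (Finset.univ.filter S.Possible).sup (fun q => ∑ r, S.d r (q r))

/-!
Fix a server `r` and a possible query tuple `q`. By privacy, each record `ℓ` can be retrieved by a
tuple `p ℓ` that sends server `r` the same query `q r`. Asking all the tuples `p ℓ` together
recovers the whole database of `k * R` bits, yet the answer to `q r` is downloaded only once.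
Retrieving each record separately costs at most `C` bits, so `k * R + (k - 1) * d ≤ k * C`, where
`d` is the length of that shared answer and `C` the download complexity.
-/

namespace PIRScheme

variable {n k R : ℕ} (S : PIRScheme n k R)

/-- The answer of server `r` to the query `q` when the database is `X`: the response map applied
to the stored encoding of `X`. -/
def answer (r : Fin n) (q : S.Q r) (X : Fin k → Fin R → Bool) : Fin (S.d r q) → Bool :=
  S.resp r q (S.E r X)

variable {S}

theorem Possible.sum_le_downloadComplexity {q : (r : Fin n) → S.Q r} (hq : S.Possible q) :
    ∑ r, S.d r (q r) ≤ S.downloadComplexity := by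
  classical
  exact Finset.le_sup (f := fun q : (r : Fin n) → S.Q r ↦ ∑ r, S.d r (q r)) (by simpa using hq)

theorem Possible.exists_mem_support_apply_eq {q : (r : Fin n) → S.Q r} (hq : S.Possible q)
    (r : Fin n) (ℓ : Fin k) : ∃ p ∈ (S.D ℓ).support, p r = q r := by
  obtain ⟨ℓ₀, hq⟩ := hq
  have mem_marginal : q r ∈ ((S.D ℓ₀).map fun p ↦ p r).support :=
    (PMF.mem_support_map_iff _ _ _).2 ⟨q, hq, rfl⟩
  rw [S.privacy r ℓ₀ ℓ] at mem_marginal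
  exact (PMF.mem_support_map_iff _ _ _).1 mem_marginal

theorem record_eq_of_answer_eq {ℓ : Fin k} {q : (r : Fin n) → S.Q r} (hq : q ∈ (S.D ℓ).support)
    {X Y : Fin k → Fin R → Bool} (h : ∀ r, S.answer r (q r) X = S.answer r (q r) Y) :
    X ℓ = Y ℓ :=
  calc X ℓ = S.recon ℓ q (fun r ↦ S.answer r (q r) X) := (S.correct X ℓ q hq).symm
    _ = S.recon ℓ q (fun r ↦ S.answer r (q r) Y) := congrArg _ (funext h)
    _ = Y ℓ := S.correct Y ℓ q hq

section JointRetrieval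

variable {ι : Type*} {a : ι → Σ r, S.Q r}

theorem answers_injective
    (ha : ∀ ℓ, ∃ p ∈ (S.D ℓ).support, ∀ r, ⟨r, p r⟩ ∈ Set.range a) :
    Function.Injective fun X i ↦ S.answer (a i).1 (a i).2 X := by
  intro X Y hXY
  funext ℓ
  obtain ⟨p, hp, hpa⟩ := ha ℓ
  refine record_eq_of_answer_eq hp fun r ↦ ?_
  obtain ⟨i, hi⟩ := hpa r
  have answer_eq : S.answer (a i).1 (a i).2 X = S.answer (a i).1 (a i).2 Y := congrFun hXY i
  rwa [hi] at answer_eq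

theorem mul_le_sum_answer_length [Fintype ι]
    (ha : ∀ ℓ, ∃ p ∈ (S.D ℓ).support, ∀ r, ⟨r, p r⟩ ∈ Set.range a) :
    k * R ≤ ∑ i, S.d (a i).1 (a i).2 := by
  classical
  have card_le : 2 ^ (k * R) ≤ 2 ^ ∑ i, S.d (a i).1 (a i).2 := by
    simpa [Finset.prod_pow_eq_pow_sum, ← pow_mul, mul_comm] using
      Fintype.card_le_of_injective _ (answers_injective ha)
  exact (Nat.pow_le_pow_iff_right one_lt_two).1 card_le

end JointRetrieval

theorem mul_le_add_sum_of_shared_query {r : Fin n} {q₀ : S.Q r}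
    {p : Fin k → (r : Fin n) → S.Q r} (hp : ∀ ℓ, p ℓ ∈ (S.D ℓ).support) (hpr : ∀ ℓ, p ℓ r = q₀) :
    k * R ≤ S.d r q₀ + ∑ ℓ, ∑ r' : {r' // r' ≠ r}, S.d r' (p ℓ r') := by
  -- `none` stands for the shared query, which is thereby asked only once.
  let a : Option (Fin k × {r' // r' ≠ r}) → Σ r, S.Q r :=
    fun i ↦ i.elim ⟨r, q₀⟩ fun j ↦ ⟨j.2, p j.1 j.2⟩
  have ha (ℓ : Fin k) : ∃ p ∈ (S.D ℓ).support, ∀ r, ⟨r, p r⟩ ∈ Set.range a := by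
    refine ⟨p ℓ, hp ℓ, fun r' ↦ ?_⟩
    by_cases hr : r' = r
    · subst hr
      exact ⟨none, by rw [hpr ℓ]; rfl⟩
    · exact ⟨some (ℓ, ⟨r', hr⟩), rfl⟩
  calc k * R ≤ ∑ i, S.d (a i).1 (a i).2 := mul_le_sum_answer_length ha
    _ = S.d r q₀ + ∑ ℓ, ∑ r' : {r' // r' ≠ r}, S.d r' (p ℓ r') := by
      rw [Fintype.sum_option, Fintype.sum_prod_type]; rfl

/-- With `d = S.d r (q r)` this is `k * R + (k - 1) * d ≤ k * S.downloadComplexity`, stated without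
truncated subtraction. -/
theorem Possible.mul_add_length_le {q : (r : Fin n) → S.Q r} (hq : S.Possible q) (r : Fin n) :
    k * (R + S.d r (q r)) ≤ k * S.downloadComplexity + S.d r (q r) := by
  choose p hp hpr using hq.exists_mem_support_apply_eq r
  set d := S.d r (q r)
  let e (ℓ : Fin k) : ℕ := ∑ r' : {r' // r' ≠ r}, S.d r' (p ℓ r')
  have tuple_le (ℓ : Fin k) : d + e ℓ ≤ S.downloadComplexity :=
    calc d + e ℓ = ∑ r', S.d r' (p ℓ r') := by
          rw [Fintype.sum_eq_add_sum_subtype_ne _ r, hpr ℓ]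
      _ ≤ S.downloadComplexity := Possible.sum_le_downloadComplexity ⟨ℓ, hp ℓ⟩
  calc k * (R + d) = k * R + k * d := mul_add ..
    _ ≤ d + ∑ ℓ, e ℓ + k * d := by gcongr; exact mul_le_add_sum_of_shared_query hp hpr
    _ = ∑ ℓ, (d + e ℓ) + d := by
      simp only [Finset.sum_add_distrib, Finset.sum_const, Finset.card_fin, smul_eq_mul]; ring
    _ ≤ k * S.downloadComplexity + d := by
      gcongr
      simpa only [Finset.card_fin, smul_eq_mul] using
        Finset.sum_le_card_nsmul Finset.univ _ _ fun ℓ _ ↦ tuple_le ℓ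

end PIRScheme

/-- Theorem 3 of the paper. If a PIR scheme for `k ≥ x + 2` records
of `R ≥ 1` bits has download complexity at most `R + x`, then at most `x` bits are
downloaded from any server on any possible query. -/
theorem per_server_download_bound (n k R x : ℕ) (hR : 1 ≤ R) (hk : x + 2 ≤ k)
    (S : PIRScheme n k R) (hD : S.downloadComplexity ≤ R + x) :
    ∀ q : (r : Fin n) → S.Q r, S.Possible q → ∀ r : Fin n, S.d r (q r) ≤ x := by
  intro q hq r
  have counting : k * (R + S.d r (q r)) ≤ k * (R + x) + S.d r (q r) :=
    (hq.mul_add_length_le r).trans (by gcongr)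
  obtain ⟨m, rfl⟩ : ∃ m, k = m + 1 := ⟨k - 1, by lia⟩
  have mul_lt : m * S.d r (q r) < m * (x + 1) :=
    calc m * S.d r (q r) ≤ m * x + x := by linarith
      _ < m * (x + 1) := by linarith
  exact Nat.le_of_lt_succ (Nat.lt_of_mul_lt_mul_left mul_lt)
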